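/- Let ν be a real number with ν ≥ 1 and let k ≥ 1. Then J_{ν−1}(z) − J_ν(z) ≠ 0 for every z in the closed interval [j_{ν−1,k}, j_{ν,k}], where j_{ν−1,k} and j_{ν,k} are the k-th positive zeroes of J_{ν−1} and J_ν respectively. -/

import Mathlib

/-- Bessel function of the first kind of real order `ν`, defined via its power series
`J_ν(z) = ∑ₘ (−1)^m / (m! Γ(ν+m+1)) (z/2)^(ν+2m)` (with real-exponent powers). -/
noncomputable def besselJ (ν z : ℝ) : ℝ :=
  ∑' m : ℕ, ((-1 : ℝ) ^ m / (Nat.factorial m * Real.Gamma (ν + m + 1))) *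
    (z / 2) ^ (ν + 2 * (m : ℝ))

/-- `x` (indexed by `k ≥ 1`) enumerates the positive zeroes of `f`: it is strictly
increasing on indices `k ≥ 1`, each `x k` is a positive zero of `f`, and every positive
zero of `f` is some `x k`. -/
def EnumPosZeros (f : ℝ → ℝ) (x : ℕ → ℝ) : Prop :=
  StrictMonoOn x (Set.Ici 1) ∧ (∀ k, 1 ≤ k → 0 < x k ∧ f (x k) = 0) ∧
    ∀ z : ℝ, 0 < z → f z = 0 → ∃ k, 1 ≤ k ∧ x k = z

/-!
Put `f z = z ^ (1 - ν) * J_{ν-1}(z)` and `g z = z ^ ν * J_ν(z)`. The classical differentiation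
formulas say `f' = -p * g` and `g' = q * f` with `p, q > 0` on `(0, ∞)`, so the point `(f, g)` keeps
turning counterclockwise. By Rolle, `g` vanishes between any two zeroes of `f`, hence its first
`k - 1` zeroes lie before `j_{ν-1,k}`, and `g` has a constant sign from just before `j_{ν-1,k}` up
to `j_{ν,k}`. If, say, `g > 0` there, then `f` is strictly decreasing, so that `f ≤ 0 ≤ g` on
`[j_{ν-1,k}, j_{ν,k}]`, never with equality on both sides. But `J_{ν-1}(z) = J_ν(z)` would make
`f z` a positive multiple of `g z`.
-/

open Filter Set Topology
open scoped Nat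

section ExponentialSeries

variable {𝕜 : Type*} [RCLike 𝕜] {a : ℕ → 𝕜} {C : ℝ}

lemma norm_mul_pow_div_factorial_le (ha : ∀ m, ‖a m‖ ≤ C) {s : 𝕜} {R : ℝ} (hs : ‖s‖ ≤ R) (m : ℕ) :
    ‖a m * (s ^ m / m !)‖ ≤ C * (R ^ m / m !) := by
  have hC : 0 ≤ C := (norm_nonneg _).trans (ha 0)
  rw [norm_mul, norm_div, norm_pow, RCLike.norm_natCast]
  gcongr
  exact ha m

lemma summable_mul_pow_div_factorial (ha : ∀ m, ‖a m‖ ≤ C) (s : 𝕜) :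
    Summable fun m ↦ a m * (s ^ m / m !) :=
  .of_norm_bounded ((Real.summable_pow_div_factorial ‖s‖).mul_left C)
    (norm_mul_pow_div_factorial_le ha le_rfl)

lemma hasDerivAt_pow_succ_div_factorial (m : ℕ) (s : 𝕜) :
    HasDerivAt (fun s : 𝕜 ↦ s ^ (m + 1) / (m + 1)!) (s ^ m / m !) s := by
  refine ((hasDerivAt_pow (m + 1) s).div_const _).congr_deriv ?_
  rw [Nat.factorial_succ, Nat.cast_mul, Nat.add_sub_cancel,
    mul_div_mul_left _ _ (Nat.cast_ne_zero.2 m.succ_ne_zero)]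

lemma hasDerivAt_tsum_mul_pow_div_factorial (ha : ∀ m, ‖a m‖ ≤ C) (s : 𝕜) :
    HasDerivAt (fun s ↦ ∑' m, a m * (s ^ m / m !)) (∑' m, a (m + 1) * (s ^ m / m !)) s := by
  have hsplit : (fun s : 𝕜 ↦ ∑' m, a m * (s ^ m / m !)) =
      fun s ↦ a 0 + ∑' m, a (m + 1) * (s ^ (m + 1) / (m + 1)!) := by
    ext s
    simpa using (summable_mul_pow_div_factorial ha s).tsum_eq_zero_add
  have hball : s ∈ Metric.ball (0 : 𝕜) (‖s‖ + 1) := by simp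
  have htail : Summable fun m ↦ a (m + 1) * (s ^ (m + 1) / (m + 1)!) :=
    (summable_mul_pow_div_factorial ha s).comp_injective (add_left_injective 1)
  have hderiv : HasDerivAt (fun s ↦ ∑' m, a (m + 1) * (s ^ (m + 1) / (m + 1)!))
      (∑' m, a (m + 1) * (s ^ m / m !)) s :=
    hasDerivAt_tsum_of_isPreconnected
      (g := fun m t ↦ a (m + 1) * (t ^ (m + 1) / (m + 1)!))
      (g' := fun m t ↦ a (m + 1) * (t ^ m / m !))
      ((Real.summable_pow_div_factorial (‖s‖ + 1)).mul_left C) Metric.isOpen_ball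
      (convex_ball _ _).isPreconnected
      (fun m t _ ↦ (hasDerivAt_pow_succ_div_factorial m t).const_mul (a (m + 1)))
      (fun m t ht ↦ norm_mul_pow_div_factorial_le (fun m ↦ ha (m + 1))
        (mem_ball_zero_iff.1 ht).le m)
      hball htail hball
  rw [hsplit]
  exact hderiv.const_add (a 0)

lemma hasSum_natCast_mul_mul_pow_div_factorial (ha : ∀ m, ‖a m‖ ≤ C) (s : 𝕜) :
    HasSum (fun m : ℕ ↦ m * (a m * (s ^ m / m !))) (s * ∑' m, a (m + 1) * (s ^ m / m !)) := by
  have hshift : ∀ m : ℕ, s * (a (m + 1) * (s ^ m / m !)) =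
      (m + 1 : ℕ) * (a (m + 1) * (s ^ (m + 1) / (m + 1)!)) := fun m ↦ by
    have : ((m + 1 : ℕ) : 𝕜) ≠ 0 := Nat.cast_ne_zero.2 m.succ_ne_zero
    rw [Nat.factorial_succ, Nat.cast_mul]
    field_simp
    ring
  rw [← hasSum_nat_add_iff' 1]
  simpa only [hshift, Finset.sum_range_one, Nat.cast_zero, zero_mul, sub_zero] using
    (summable_mul_pow_div_factorial (fun m ↦ ha (m + 1)) s).hasSum.mul_left s

end ExponentialSeries

/-- At a pole of `Γ` the junk values `Γ = 0` and `0⁻¹ = 0` combine to the correct value of the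
entire function `1 / Γ`. -/
lemma inv_Gamma_eq_self_mul_inv_Gamma_add_one (s : ℝ) :
    (Real.Gamma s)⁻¹ = s * (Real.Gamma (s + 1))⁻¹ := by
  rcases eq_or_ne s 0 with rfl | hs
  · simp [Real.Gamma_zero]
  · rw [Real.Gamma_add_one hs, mul_inv, mul_inv_cancel_left₀ hs]

lemma exists_forall_norm_inv_Gamma_add_natCast_le (s : ℝ) :
    ∃ C, ∀ m : ℕ, ‖(Real.Gamma (s + m))⁻¹‖ ≤ C := by
  have hlarge : ∀ᶠ m : ℕ in atTop, ‖(Real.Gamma (s + m))⁻¹‖ ≤ 1 := by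
    have hatTop : Tendsto (fun m : ℕ ↦ s + m) atTop atTop :=
      tendsto_atTop_add_const_left _ s tendsto_natCast_atTop_atTop
    filter_upwards [hatTop.eventually_ge_atTop 2] with m hm
    have hGamma : 1 ≤ Real.Gamma (s + m) :=
      Real.Gamma_two ▸ Real.Gamma_strictMonoOn_Ici.monotoneOn self_mem_Ici hm hm
    rw [norm_inv]
    exact inv_le_one_of_one_le₀ (hGamma.trans (le_abs_self _))
  obtain ⟨C, hC⟩ := (isBoundedUnder_of_eventually_le hlarge).bddAbove_range
  exact ⟨C, fun m ↦ hC (mem_range_self m)⟩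

/-- The Bessel–Clifford function `C_μ(s) = ∑ₘ s ^ m / (m! Γ(μ + m + 1))`, the entire function
underlying the Bessel functions: `J_μ(z) = (z / 2) ^ μ * C_μ(-z² / 4)`. -/
noncomputable def besselClifford (μ s : ℝ) : ℝ :=
  ∑' m : ℕ, (Real.Gamma (μ + 1 + m))⁻¹ * (s ^ m / m !)

lemma hasDerivAt_besselClifford (μ s : ℝ) :
    HasDerivAt (besselClifford μ) (besselClifford (μ + 1) s) s := by
  obtain ⟨C, hC⟩ := exists_forall_norm_inv_Gamma_add_natCast_le (μ + 1)
  refine (hasDerivAt_tsum_mul_pow_div_factorial hC s).congr_deriv ?_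
  simp only [besselClifford, Nat.cast_succ, add_assoc, add_comm (1 : ℝ)]

lemma besselClifford_sub_one (μ s : ℝ) :
    besselClifford (μ - 1) s = μ * besselClifford μ s + s * besselClifford (μ + 1) s := by
  obtain ⟨C, hC⟩ := exists_forall_norm_inv_Gamma_add_natCast_le (μ + 1)
  have hsum := ((summable_mul_pow_div_factorial hC s).hasSum.mul_left μ).add
    (hasSum_natCast_mul_mul_pow_div_factorial hC s)
  have hcoeff : ∀ m : ℕ, (Real.Gamma (μ - 1 + 1 + m))⁻¹ = (μ + m) * (Real.Gamma (μ + 1 + m))⁻¹ :=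
    fun m ↦ by
      rw [sub_add_cancel, inv_Gamma_eq_self_mul_inv_Gamma_add_one, add_right_comm]
  calc
    besselClifford (μ - 1) s
      = ∑' m : ℕ, (μ * ((Real.Gamma (μ + 1 + m))⁻¹ * (s ^ m / m !)) +
          m * ((Real.Gamma (μ + 1 + m))⁻¹ * (s ^ m / m !))) :=
        tsum_congr fun m ↦ by rw [hcoeff]; ring
    _ = μ * besselClifford μ s + s * besselClifford (μ + 1) s := by
        rw [hsum.tsum_eq]
        simp only [besselClifford, Nat.cast_succ, add_assoc, add_comm (1 : ℝ)]

lemma besselJ_eq_rpow_mul_besselClifford (μ : ℝ) {z : ℝ} (hz : 0 < z) :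
    besselJ μ z = (z / 2) ^ μ * besselClifford μ (-(z / 2) ^ 2) := by
  rw [besselJ, besselClifford, ← tsum_mul_left]
  refine tsum_congr fun m ↦ ?_
  have hpow : (z / 2) ^ (μ + 2 * (m : ℝ)) = (z / 2) ^ μ * ((z / 2) ^ 2) ^ m := by
    rw [Real.rpow_add (by positivity), ← pow_mul, ← Real.rpow_natCast]
    push_cast
    rfl
  rw [hpow, neg_pow ((z / 2) ^ 2), add_right_comm μ 1, div_eq_mul_inv, mul_inv]
  ring

lemma hasDerivAt_besselClifford_neg_half_sq (μ z : ℝ) :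
    HasDerivAt (fun z ↦ besselClifford μ (-(z / 2) ^ 2))
      (-(z / 2) * besselClifford (μ + 1) (-(z / 2) ^ 2)) z := by
  have hsq : HasDerivAt (fun z : ℝ ↦ -(z / 2) ^ 2) (-(z / 2)) z := by
    refine (((hasDerivAt_id z).div_const 2).pow 2).neg.congr_deriv ?_
    simp only [id]
    ring
  exact ((hasDerivAt_besselClifford μ _).comp z hsq).congr_deriv (mul_comm _ _)

lemma hasDerivAt_rpow_neg_mul_besselJ (μ : ℝ) {z : ℝ} (hz : 0 < z) :
    HasDerivAt (fun z ↦ z ^ (-μ) * besselJ μ z) (-(z ^ (-μ) * besselJ (μ + 1) z)) z := by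
  have hreduce : (fun z ↦ z ^ (-μ) * besselJ μ z) =ᶠ[𝓝 z]
      fun z ↦ (2 ^ μ)⁻¹ * besselClifford μ (-(z / 2) ^ 2) := by
    filter_upwards [lt_mem_nhds hz] with w hw
    rw [besselJ_eq_rpow_mul_besselClifford μ hw, Real.div_rpow hw.le zero_le_two,
      Real.rpow_neg hw.le]
    field_simp
  refine HasDerivAt.congr_of_eventuallyEq ?_ hreduce
  refine ((hasDerivAt_besselClifford_neg_half_sq μ z).const_mul _).congr_deriv ?_
  rw [besselJ_eq_rpow_mul_besselClifford (μ + 1) hz, Real.rpow_add_one (by positivity),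
    Real.div_rpow hz.le zero_le_two, Real.rpow_neg hz.le]
  field_simp

lemma hasDerivAt_rpow_mul_besselJ (μ : ℝ) {z : ℝ} (hz : 0 < z) :
    HasDerivAt (fun z ↦ z ^ μ * besselJ μ z) (z ^ μ * besselJ (μ - 1) z) z := by
  have hreduce : (fun z ↦ z ^ μ * besselJ μ z) =ᶠ[𝓝 z]
      fun z ↦ (2 ^ μ)⁻¹ * (z ^ (2 * μ) * besselClifford μ (-(z / 2) ^ 2)) := by
    filter_upwards [lt_mem_nhds hz] with w hw
    rw [besselJ_eq_rpow_mul_besselClifford μ hw, Real.div_rpow hw.le zero_le_two, two_mul,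
      Real.rpow_add hw]
    field_simp
  refine HasDerivAt.congr_of_eventuallyEq ?_ hreduce
  refine (((Real.hasDerivAt_rpow_const (.inl hz.ne')).mul
    (hasDerivAt_besselClifford_neg_half_sq μ z)).const_mul _).congr_deriv ?_
  rw [besselJ_eq_rpow_mul_besselClifford (μ - 1) hz, besselClifford_sub_one,
    Real.rpow_sub_one hz.ne', Real.rpow_sub_one (by positivity), two_mul, Real.rpow_add hz,
    Real.div_rpow hz.le zero_le_two]
  field_simp
  ring

namespace EnumPosZeros

variable {f u : ℝ → ℝ} {x : ℕ → ℝ}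

lemma mul_left (hx : EnumPosZeros f x) (hu : ∀ z, 0 < z → u z ≠ 0) :
    EnumPosZeros (fun z ↦ u z * f z) x := by
  obtain ⟨hmono, hzero, hsurj⟩ := hx
  refine ⟨hmono, fun k hk ↦ ⟨(hzero k hk).1, ?_⟩, fun z hz hfz ↦ hsurj z hz ?_⟩
  · simp only [(hzero k hk).2, mul_zero]
  · exact (mul_eq_zero.1 hfz).resolve_left (hu z hz)

lemma le_of_forall_lt (hx : EnumPosZeros f x) {k : ℕ} (hk : 1 ≤ k) {z : ℝ} (hz : 0 < z)
    (hfz : f z = 0) (hlt : ∀ i, 1 ≤ i → i < k → x i < z) : x k ≤ z := by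
  obtain ⟨m, hm, rfl⟩ := hx.2.2 z hz hfz
  by_contra! hmk
  exact (hlt m hm ((hx.1.lt_iff_lt hm hk).1 hmk)).false

end EnumPosZeros

lemma forall_pos_or_forall_neg_of_isPreconnected {X : Type*} [TopologicalSpace X] {s : Set X}
    (hs : IsPreconnected s) {f : X → ℝ} (hf : ContinuousOn f s) (hne : ∀ x ∈ s, f x ≠ 0) :
    (∀ x ∈ s, 0 < f x) ∨ ∀ x ∈ s, f x < 0 := by
  by_contra! ⟨⟨a, ha, hfa⟩, ⟨b, hb, hfb⟩⟩
  obtain ⟨c, hc, hfc⟩ := hs.intermediate_value ha hb hf ⟨hfa, hfb⟩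
  exact hne c hc hfc

/-- The pair `(f, g)` solves the planar system `f' = -p * g`, `g' = q * f` on `(0, ∞)` with
positive coefficients `p` and `q`; such a solution turns counterclockwise around the origin. -/
structure IsRotatingPair (p q f g : ℝ → ℝ) : Prop where
  pos_left : ∀ z, 0 < z → 0 < p z
  pos_right : ∀ z, 0 < z → 0 < q z
  hasDerivAt_left : ∀ z, 0 < z → HasDerivAt f (-(p z * g z)) z
  hasDerivAt_right : ∀ z, 0 < z → HasDerivAt g (q z * f z) z

namespace IsRotatingPair

variable {p q f g : ℝ → ℝ} {x y : ℕ → ℝ} {k : ℕ} {a b c l z : ℝ}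

lemma rotate (h : IsRotatingPair p q f g) : IsRotatingPair q p g (-f) where
  pos_left := h.pos_right
  pos_right := h.pos_left
  hasDerivAt_left z hz := by simpa using h.hasDerivAt_right z hz
  hasDerivAt_right z hz := by simpa using (h.hasDerivAt_left z hz).neg

lemma continuousOn_left (h : IsRotatingPair p q f g) : ContinuousOn f (Ioi 0) :=
  fun z hz ↦ (h.hasDerivAt_left z hz).continuousAt.continuousWithinAt

lemma strictAntiOn_left (h : IsRotatingPair p q f g) (hl : 0 < l)
    (hg : ∀ z ∈ Ioo l b, 0 < g z) : StrictAntiOn f (Icc l b) := by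
  refine strictAntiOn_of_hasDerivWithinAt_neg (convex_Icc l b)
    (h.continuousOn_left.mono fun z hz ↦ hl.trans_le hz.1)
    (f' := fun z ↦ -(p z * g z)) ?_ ?_ <;> rw [interior_Icc] <;> intro z hz
  · exact (h.hasDerivAt_left z (hl.trans hz.1)).hasDerivWithinAt
  · exact neg_neg_of_pos (mul_pos (h.pos_left z (hl.trans hz.1)) (hg z hz))

lemma strictMonoOn_right (h : IsRotatingPair p q f g) (hl : 0 < l)
    (hf : ∀ z ∈ Ioo l b, 0 < f z) : StrictMonoOn g (Icc l b) := by
  have hanti := h.rotate.rotate.rotate.strictAntiOn_left hl (b := b) (by simpa using hf)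
  simpa using hanti.neg

lemma exists_right_eq_zero (h : IsRotatingPair p q f g) (ha : 0 < a) (hab : a < b)
    (hfa : f a = 0) (hfb : f b = 0) : ∃ z ∈ Ioo a b, g z = 0 := by
  obtain ⟨z, hz, hderiv⟩ := exists_hasDerivAt_eq_zero hab
    (h.continuousOn_left.mono fun z hz ↦ ha.trans_le hz.1) (hfa.trans hfb.symm)
    fun z hz ↦ h.hasDerivAt_left z (ha.trans hz.1)
  have hz0 : 0 < z := ha.trans hz.1
  exact ⟨z, hz, (mul_eq_zero.1 (neg_eq_zero.1 hderiv)).resolve_left (h.pos_left z hz0).ne'⟩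

lemma left_lt_mul_right (h : IsRotatingPair p q f g) (hl : 0 < l) (hla : l < a)
    (hg : ∀ z ∈ Ico l b, 0 < g z) (hfa : f a = 0) (hgb : g b = 0) (hz : z ∈ Icc a b)
    (hc : 0 < c) : f z < c * g z := by
  have hab : a ≤ b := hz.1.trans hz.2
  have hlb : l < b := hla.trans_le hab
  have hf_anti : StrictAntiOn f (Icc l b) :=
    h.strictAntiOn_left hl fun w hw ↦ hg w (Ioo_subset_Ico_self hw)
  have ha_mem : a ∈ Icc l b := ⟨hla.le, hab⟩
  -- A common zero at `a = b` would force `g` to increase up to `g b = 0`.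
  have hab_lt : a < b := by
    refine hab.lt_of_ne fun hab_eq ↦ ?_
    have hf_pos : ∀ w ∈ Ioo l b, 0 < f w := fun w hw ↦
      hfa ▸ hf_anti (Ioo_subset_Icc_self hw) ha_mem (hab_eq ▸ hw.2)
    have hg_mono := h.strictMonoOn_right hl hf_pos
    exact (hg l ⟨le_rfl, hlb⟩).not_gt
      (hgb ▸ hg_mono (left_mem_Icc.2 hlb.le) (right_mem_Icc.2 hlb.le) hlb)
  rcases hz.2.eq_or_lt with rfl | hzb
  · simpa [hgb, hfa] using hf_anti ha_mem (right_mem_Icc.2 hlb.le) hab_lt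
  · have hlz : l ≤ z := hla.le.trans hz.1
    calc
      f z ≤ f a := hf_anti.antitoneOn ha_mem ⟨hlz, hz.2⟩ hz.1
      _ = 0 := hfa
      _ < c * g z := mul_pos hc (hg z ⟨hlz, hzb⟩)

lemma left_ne_mul_right (h : IsRotatingPair p q f g) (hl : 0 < l) (hla : l < a)
    (hg : ∀ z ∈ Ico l b, g z ≠ 0) (hfa : f a = 0) (hgb : g b = 0) (hz : z ∈ Icc a b)
    (hc : 0 < c) : f z ≠ c * g z := by
  have hg_cont : ContinuousOn g (Ico l b) :=
    h.rotate.continuousOn_left.mono fun w hw ↦ hl.trans_le hw.1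
  rcases forall_pos_or_forall_neg_of_isPreconnected isPreconnected_Ico hg_cont hg with hpos | hneg
  · exact (h.left_lt_mul_right hl hla hpos hfa hgb hz hc).ne
  · have hlt := h.rotate.rotate.left_lt_mul_right hl hla (by simpa using hneg) (by simpa using hfa)
      (by simpa using hgb) hz hc
    simp only [Pi.neg_apply, mul_neg, neg_lt_neg_iff] at hlt
    exact hlt.ne'

lemma enum_right_lt_enum_left (h : IsRotatingPair p q f g) (hx : EnumPosZeros f x)
    (hy : EnumPosZeros g y) (hk : 1 ≤ k) : ∀ i, 1 ≤ i → i < k → y i < x k := by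
  induction k, hk using Nat.le_induction with
  | base => omega
  | succ k hk ih =>
    intro i hi hik
    obtain ⟨hxk_pos, hfxk⟩ := hx.2.1 k hk
    obtain ⟨w, hw, hgw⟩ := h.exists_right_eq_zero hxk_pos (hx.1 hk (by simp) k.lt_succ_self)
      hfxk (hx.2.1 (k + 1) (by omega)).2
    calc
      y i ≤ y k := hy.1.monotoneOn hi hk (Nat.lt_succ_iff.1 hik)
      _ ≤ w := hy.le_of_forall_lt hk (hxk_pos.trans hw.1) hgw
          fun j hj hjk ↦ (ih j hj hjk).trans hw.1
      _ < x (k + 1) := hw.2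

lemma exists_lt_enum_left_forall_right_ne_zero (h : IsRotatingPair p q f g)
    (hx : EnumPosZeros f x) (hy : EnumPosZeros g y) (hk : 1 ≤ k) :
    ∃ l, 0 < l ∧ l < x k ∧ ∀ z ∈ Ico l (y k), g z ≠ 0 := by
  have hbelow : ∀ᶠ l in 𝓝[<] (x k), ∀ i ∈ Finset.Ico 1 k, y i < l := by
    rw [eventually_all_finset]
    intro i hi
    rw [Finset.mem_Ico] at hi
    exact mem_nhdsWithin_of_mem_nhds
      (lt_mem_nhds (h.enum_right_lt_enum_left hx hy hk i hi.1 hi.2))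
  obtain ⟨l, hl, hl_pos, hlx⟩ :=
    (hbelow.and (Ioo_mem_nhdsLT (hx.2.1 k hk).1)).exists
  refine ⟨l, hl_pos, hlx, fun z hz hgz ↦ hz.2.not_ge ?_⟩
  exact hy.le_of_forall_lt hk (hl_pos.trans_le hz.1) hgz
    fun i hi hik ↦ (hl i (Finset.mem_Ico.2 ⟨hi, hik⟩)).trans_le hz.1

theorem left_ne_mul_right_of_mem_Icc_enum (h : IsRotatingPair p q f g) (hx : EnumPosZeros f x)
    (hy : EnumPosZeros g y) (hk : 1 ≤ k) (hz : z ∈ Icc (x k) (y k)) (hc : 0 < c) :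
    f z ≠ c * g z := by
  obtain ⟨l, hl, hlx, hg⟩ := h.exists_lt_enum_left_forall_right_ne_zero hx hy hk
  exact h.left_ne_mul_right hl hlx hg (hx.2.1 k hk).2 (hy.2.1 k hk).2 hz hc

end IsRotatingPair

theorem isRotatingPair_besselJ (ν : ℝ) :
    IsRotatingPair (fun z ↦ z ^ (1 - 2 * ν)) (fun z ↦ z ^ (2 * ν - 1))
      (fun z ↦ z ^ (1 - ν) * besselJ (ν - 1) z) (fun z ↦ z ^ ν * besselJ ν z) where
  pos_left z hz := Real.rpow_pos_of_pos hz _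
  pos_right z hz := Real.rpow_pos_of_pos hz _
  hasDerivAt_left z hz := by
    have h := hasDerivAt_rpow_neg_mul_besselJ (ν - 1) hz
    rw [neg_sub, sub_add_cancel] at h
    refine h.congr_deriv ?_
    rw [← mul_assoc, ← Real.rpow_add hz]
    ring_nf
  hasDerivAt_right z hz := by
    refine (hasDerivAt_rpow_mul_besselJ ν hz).congr_deriv ?_
    rw [← mul_assoc, ← Real.rpow_add hz]
    ring_nf

theorem stmt3_general (ν : ℝ) (k : ℕ) (hk : 1 ≤ k) (jm1 jn : ℕ → ℝ)
    (hjm1 : EnumPosZeros (besselJ (ν - 1)) jm1) (hjn : EnumPosZeros (besselJ ν) jn) :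
    ∀ z ∈ Icc (jm1 k) (jn k), besselJ (ν - 1) z - besselJ ν z ≠ 0 := by
  intro z hz hsub
  have hz_pos : 0 < z := (hjm1.2.1 k hk).1.trans_le hz.1
  have hrpow_ne : ∀ r w : ℝ, 0 < w → w ^ r ≠ 0 := fun r w hw ↦ (Real.rpow_pos_of_pos hw r).ne'
  refine (isRotatingPair_besselJ ν).left_ne_mul_right_of_mem_Icc_enum
    (hjm1.mul_left (hrpow_ne _)) (hjn.mul_left (hrpow_ne _)) hk hz
    (Real.rpow_pos_of_pos hz_pos (1 - 2 * ν)) ?_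
  rw [sub_eq_zero.1 hsub, ← mul_assoc, ← Real.rpow_add hz_pos]
  ring_nf

/-- For `ν ≥ 1` and `k ≥ 1`, `J_{ν−1}(z) − J_ν(z) ≠ 0` on `[j_{ν−1,k}, j_{ν,k}]`. -/
theorem stmt3 (ν : ℝ) (hν : 1 ≤ ν) (k : ℕ) (hk : 1 ≤ k)
    (jm1 jn : ℕ → ℝ)
    (hjm1 : EnumPosZeros (besselJ (ν - 1)) jm1)
    (hjn : EnumPosZeros (besselJ ν) jn) :
    ∀ z ∈ Set.Icc (jm1 k) (jn k), besselJ (ν - 1) z - besselJ ν z ≠ 0 := by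
  exact stmt3_general ν k hk jm1 jn hjm1 hjn
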